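/- arXiv:1407.1109 — 2 statements merged into one kernel-verified Lean document; each statement's English description precedes it below -/
import Mathlib

section
/- For k ≥ 1, let q₁,…,q_k be independent, uniformly distributed random points in the closed Euclidean ball B(0,1/√π) ⊆ ℝ² of unit area, and let α_k denote the two-dimensional Lebesgue measure of the union ⋃_{i=1}^k B(q_i,1/√π), where B(q,s) is the closed ball of radius s centered at q. Then for all δ > 0 and G > 0, the series Σ_{k=1}^{∞} (−1)^{k−1}·(δ^k/k!)·E[e^{−δ·G·α_k}] converges absolutely and satisfies Σ_{k=1}^{∞} (−1)^{k−1}·(δ^k/k!)·E[e^{−δ·G·α_k}] ≥ (1 − e^{−δ})·e^{−δ·G}. -/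
open MeasureTheory Metric Real

/-- The uniform probability measure on the closed ball of unit area
B(0, 1/√π) ⊆ ℝ². -/
noncomputable def unifBall : Measure (EuclideanSpace ℝ (Fin 2)) :=
  (volume (closedBall (0 : EuclideanSpace ℝ (Fin 2)) (Real.sqrt π)⁻¹))⁻¹ •
    volume.restrict (closedBall (0 : EuclideanSpace ℝ (Fin 2)) (Real.sqrt π)⁻¹)

/-- α_k: the area (two-dimensional Lebesgue measure) of the union
⋃_{i=1}^k B(q_i, 1/√π). -/
noncomputable def unionArea {k : ℕ} (q : Fin k → EuclideanSpace ℝ (Fin 2)) : ℝ :=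
  (volume (⋃ i, closedBall (q i) (Real.sqrt π)⁻¹)).toReal

/-- E[e^{−δ·G·α_k}], where the k centers are i.i.d. uniform in B(0, 1/√π). -/
noncomputable def expMoment (δ G : ℝ) (k : ℕ) : ℝ :=
  ∫ q : Fin k → EuclideanSpace ℝ (Fin 2),
    Real.exp (-(δ * G) * unionArea q) ∂(Measure.pi fun _ => unifBall)

namespace SeriesAux

abbrev E2 := EuclideanSpace ℝ (Fin 2)

/-- Measure of the set of points at distance more than `r` from all of the `q i`. -/
noncomputable def void (ν : Measure E2) (r : ℝ) {k : ℕ} (q : Fin k → E2) : ℝ :=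
  ν.real {y | ∀ i, r < dist (q i) y}

def bigS (r : ℝ) (k n : ℕ) : Set ((Fin k → E2) × (Fin n → E2)) :=
  {p | ∀ j, ∀ i, r < dist (p.1 i) (p.2 j)}

lemma bigS_meas (r : ℝ) (k n : ℕ) : MeasurableSet (bigS r k n) := by
  have : bigS r k n = ⋂ j, ⋂ i, {p | r < dist (p.1 i) (p.2 j)} := by
    ext p; simp [bigS]
  rw [this]
  refine MeasurableSet.iInter fun j => MeasurableSet.iInter fun i => ?_
  exact measurableSet_lt (by fun_prop) (by fun_prop)

lemma void_pow (ν : Measure E2) [IsProbabilityMeasure ν] (r : ℝ) {k n : ℕ} (q : Fin k → E2) :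
    void ν r q ^ n = ((Measure.pi fun _ : Fin n => ν) (Prod.mk q ⁻¹' bigS r k n)).toReal := by
  have : Prod.mk q ⁻¹' bigS r k n
      = Set.pi Set.univ (fun _ : Fin n => {y | ∀ i, r < dist (q i) y}) := by
    ext x; simp [bigS]
  rw [this, Measure.pi_pi]
  simp [void, Measure.real]

lemma void_pow' (μ : Measure E2) [IsProbabilityMeasure μ] (r : ℝ) {k n : ℕ} (x : Fin n → E2) :
    void μ r x ^ k
      = ((Measure.pi fun _ : Fin k => μ) ((fun q => (q, x)) ⁻¹' bigS r k n)).toReal := by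
  have : (fun q => (q, x)) ⁻¹' bigS r k n
      = Set.pi Set.univ (fun _ : Fin k => {y | ∀ i, r < dist (x i) y}) := by
    ext q; simp only [bigS, Set.mem_preimage, Set.mem_ofPred_eq, Set.mem_pi, Set.mem_univ,
      true_implies]
    constructor
    · intro h i j; rw [dist_comm]; exact h j i
    · intro h i j; rw [dist_comm]; exact h j i
  rw [this, Measure.pi_pi]
  simp [void, Measure.real]

lemma void_meas (ν : Measure E2) [IsProbabilityMeasure ν] (r : ℝ) (k : ℕ) :
    Measurable (fun q : Fin k → E2 => void ν r q) := by
  have h : (fun q : Fin k → E2 => void ν r q) = fun q =>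
      ((Measure.pi fun _ : Fin 1 => ν) (Prod.mk q ⁻¹' bigS r k 1)).toReal := by
    funext q; rw [← void_pow, pow_one]
  rw [h]
  exact (measurable_measure_prodMk_left (bigS_meas r k 1)).ennreal_toReal

lemma void_nonneg (ν : Measure E2) (r : ℝ) {k : ℕ} (q : Fin k → E2) : 0 ≤ void ν r q :=
  measureReal_nonneg

lemma void_le_one (ν : Measure E2) [IsProbabilityMeasure ν] (r : ℝ) {k : ℕ} (q : Fin k → E2) :
    void ν r q ≤ 1 := measureReal_le_one

lemma void_pow_integrable (μ ν : Measure E2) [IsProbabilityMeasure μ] [IsProbabilityMeasure ν]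
    (r : ℝ) (k n : ℕ) :
    Integrable (fun q : Fin k → E2 => void ν r q ^ n) (Measure.pi fun _ : Fin k => μ) := by
  refine Integrable.of_bound ((void_meas ν r k).pow_const n).aestronglyMeasurable 1 ?_
  filter_upwards with q
  rw [Real.norm_of_nonneg (pow_nonneg (void_nonneg _ _ _) _)]
  exact pow_le_one₀ (void_nonneg _ _ _) (void_le_one _ _ _)

lemma void_swap (μ ν : Measure E2) [IsProbabilityMeasure μ] [IsProbabilityMeasure ν]
    (r : ℝ) (k n : ℕ) :
    ∫ q, void ν r q ^ n ∂(Measure.pi fun _ : Fin k => μ)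
      = ∫ x, void μ r x ^ k ∂(Measure.pi fun _ : Fin n => ν) := by
  simp_rw [void_pow ν r (n := n)]
  rw [integral_toReal (measurable_measure_prodMk_left (bigS_meas r k n)).aemeasurable
    (by filter_upwards with q; exact measure_lt_top _ _), ← Measure.prod_apply (bigS_meas r k n),
    Measure.prod_apply_symm (bigS_meas r k n)]
  rw [← integral_toReal (measurable_measure_prodMk_right (bigS_meas r k n)).aemeasurable
    (by filter_upwards with q; exact measure_lt_top _ _)]
  simp_rw [void_pow' μ r (k := k)]

/-- The basic real power series. -/
lemma hasSum_one_sub_exp (δ v : ℝ) :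
    HasSum (fun k : ℕ => (-1 : ℝ) ^ k * (δ ^ (k + 1) / (Nat.factorial (k + 1) : ℝ)) * v ^ (k + 1))
      (1 - Real.exp (-(δ * v))) := by
  have h : HasSum (fun k : ℕ => (-(δ * v)) ^ k / (Nat.factorial k : ℝ)) (Real.exp (-(δ * v))) := by
    rw [Real.exp_eq_exp_ℝ]; exact NormedSpace.expSeries_div_hasSum_exp (-(δ * v))
  have h2 := (hasSum_nat_add_iff' 1).2 h
  have h3 := h2.neg
  have e1 : (fun k : ℕ => (-1 : ℝ) ^ k * (δ ^ (k + 1) / (Nat.factorial (k + 1) : ℝ)) *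
      v ^ (k + 1)) = fun b => -((-(δ * v)) ^ (b + 1) / (Nat.factorial (b + 1) : ℝ)) := by
    funext k
    rw [neg_pow (δ * v), mul_pow, pow_succ (-1 : ℝ) k]; ring
  have e2 : 1 - Real.exp (-(δ * v)) = -(Real.exp (-(δ * v)) -
      ∑ i ∈ Finset.range 1, (-(δ * v)) ^ i / (Nat.factorial i : ℝ)) := by
    simp
  rw [e1, e2]
  exact h3

lemma exp_concave (δ v : ℝ) (h0 : 0 ≤ v) (h1 : v ≤ 1) :
    (1 - Real.exp (-δ)) * v ≤ 1 - Real.exp (-(δ * v)) := by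
  have := convexOn_exp.2 (Set.mem_univ (-δ)) (Set.mem_univ 0) h0 (sub_nonneg.2 h1) (by ring)
  simp only [smul_eq_mul, mul_zero, add_zero, Real.exp_zero, mul_one] at this
  rw [show v * -δ = -(δ * v) by ring] at this
  nlinarith

lemma summable_coef (δ : ℝ) :
    Summable (fun k : ℕ => δ ^ (k + 1) / (Nat.factorial (k + 1) : ℝ)) :=
  (summable_nat_add_iff 1).2 (Real.summable_pow_div_factorial δ)

/-- fixed-n inequality. -/
lemma fixed_n (ν : Measure E2) (μ : Measure E2) [IsProbabilityMeasure μ] [IsProbabilityMeasure ν]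
    (r δ : ℝ) (hδ : 0 < δ) (n : ℕ) :
    (1 - Real.exp (-δ)) * ∫ x, void μ r x ^ 1 ∂(Measure.pi fun _ : Fin n => ν) ≤
      ∑' k : ℕ, (-1 : ℝ) ^ k * (δ ^ (k + 1) / (Nat.factorial (k + 1) : ℝ)) *
        ∫ x, void μ r x ^ (k + 1) ∂(Measure.pi fun _ : Fin n => ν) := by
  have key := hasSum_integral_of_summable_integral_norm
    (μ := Measure.pi fun _ : Fin n => ν)
    (F := fun (k : ℕ) (x : Fin n → E2) => (-1 : ℝ) ^ k *
      (δ ^ (k + 1) / (Nat.factorial (k + 1) : ℝ)) * void μ r x ^ (k + 1))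
    (fun k => (void_pow_integrable ν μ r n (k + 1)).const_mul _)
    (by
      refine Summable.of_nonneg_of_le (fun k => integral_nonneg fun x => norm_nonneg _)
        (fun k => ?_) (summable_coef δ)
      calc _ ≤ ∫ x, δ ^ (k + 1) / (Nat.factorial (k + 1) : ℝ)
              ∂(Measure.pi fun _ : Fin n => ν) := by
            refine integral_mono ((void_pow_integrable ν μ r n (k + 1)).const_mul _).norm
              (integrable_const _) fun x => ?_
            have hp : void μ r x ^ (k + 1) ≤ 1 :=
              pow_le_one₀ (void_nonneg _ _ _) (void_le_one _ _ _)
            have hp0 : 0 ≤ void μ r x ^ (k + 1) := pow_nonneg (void_nonneg _ _ _) _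
            have hc : 0 ≤ δ ^ (k + 1) / (Nat.factorial (k + 1) : ℝ) := by positivity
            simp only [norm_mul, norm_pow, norm_neg, norm_one, one_pow, one_mul]
            rw [← norm_pow, Real.norm_of_nonneg hp0, Real.norm_of_nonneg hc]
            exact mul_le_of_le_one_right hc hp
        _ = _ := by simp)
  simp_rw [integral_const_mul] at key
  rw [key.tsum_eq]
  simp_rw [(hasSum_one_sub_exp δ _).tsum_eq]
  rw [← integral_const_mul]
  refine integral_mono ((void_pow_integrable ν μ r n 1).const_mul _) ?_ fun x => ?_
  · refine Integrable.of_bound (C := 2) ?_ ?_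
    · have := void_meas μ r n
      exact (by fun_prop : Measurable fun x : Fin n → E2 =>
        1 - Real.exp (-(δ * void μ r x))).aestronglyMeasurable
    · filter_upwards with x
      have h1 : Real.exp (-(δ * void μ r x)) ≤ 1 :=
        Real.exp_le_one_iff.2 (by have := mul_nonneg hδ.le (void_nonneg μ r x); linarith)
      have h2 := Real.exp_pos (-(δ * void μ r x))
      rw [Real.norm_eq_abs, abs_le]; constructor <;> linarith
  · simpa using exp_concave δ _ (void_nonneg μ r x) (void_le_one μ r x)

/-- Poisson mixture representation. -/
lemma mixture (μ ν : Measure E2) [IsProbabilityMeasure μ] [IsProbabilityMeasure ν]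
    (r L : ℝ) (hL : 0 ≤ L) (k : ℕ) :
    HasSum (fun n : ℕ => (Real.exp (-L) * (L ^ n / (Nat.factorial n : ℝ))) *
        ∫ x, void μ r x ^ k ∂(Measure.pi fun _ : Fin n => ν))
      (∫ q, Real.exp (-(L * (1 - void ν r q))) ∂(Measure.pi fun _ : Fin k => μ)) := by
  have key := hasSum_integral_of_summable_integral_norm
    (μ := Measure.pi fun _ : Fin k => μ)
    (F := fun (n : ℕ) (q : Fin k → E2) => (Real.exp (-L) * (L ^ n / (Nat.factorial n : ℝ))) *
      void ν r q ^ n)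
    (fun n => (void_pow_integrable μ ν r k n).const_mul _)
    (by
      refine Summable.of_nonneg_of_le (fun k => integral_nonneg fun x => norm_nonneg _)
        (fun n => ?_) ((Real.summable_pow_div_factorial L).mul_left (Real.exp (-L)))
      calc _ ≤ ∫ x, Real.exp (-L) * (L ^ n / (Nat.factorial n : ℝ))
              ∂(Measure.pi fun _ : Fin k => μ) := by
            refine integral_mono ((void_pow_integrable μ ν r k n).const_mul _).norm
              (integrable_const _) fun x => ?_
            have hp : void ν r x ^ n ≤ 1 :=
              pow_le_one₀ (void_nonneg _ _ _) (void_le_one _ _ _)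
            have hp0 : 0 ≤ void ν r x ^ n := pow_nonneg (void_nonneg _ _ _) _
            have hc : 0 ≤ Real.exp (-L) * (L ^ n / (Nat.factorial n : ℝ)) := by positivity
            simp only []
            rw [Real.norm_of_nonneg (mul_nonneg hc hp0)]
            exact mul_le_of_le_one_right hc hp
        _ = _ := by simp)
  simp_rw [integral_const_mul, void_swap μ ν r k] at key
  have e : ∀ q : Fin k → E2, Real.exp (-(L * (1 - void ν r q))) =
      ∑' n : ℕ, Real.exp (-L) * (L ^ n / (Nat.factorial n : ℝ)) * void ν r q ^ n := by
    intro q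
    have h : HasSum (fun n : ℕ => (L * void ν r q) ^ n / (Nat.factorial n : ℝ))
        (Real.exp (L * void ν r q)) := by
      rw [Real.exp_eq_exp_ℝ]; exact NormedSpace.expSeries_div_hasSum_exp _
    have h2 := h.mul_left (Real.exp (-L))
    rw [← Real.exp_add] at h2
    rw [show -(L * (1 - void ν r q)) = -L + L * void ν r q by ring, ← h2.tsum_eq]
    congr 1
    funext n
    rw [mul_pow]; ring
  simp_rw [e]
  exact key

lemma abstract_main (μ ν : Measure E2) [IsProbabilityMeasure μ] [IsProbabilityMeasure ν]
    (r L δ : ℝ) (hL : 0 ≤ L) (hδ : 0 < δ) (m : ℕ → ℝ)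
    (hm : ∀ k, m k = ∫ q, Real.exp (-(L * (1 - void ν r q))) ∂(Measure.pi fun _ : Fin k => μ)) :
    Summable (fun k : ℕ =>
      |(-1 : ℝ) ^ k * (δ ^ (k + 1) / (Nat.factorial (k + 1) : ℝ)) * m (k + 1)|) ∧
    (1 - Real.exp (-δ)) * m 1 ≤
      ∑' k : ℕ, (-1 : ℝ) ^ k * (δ ^ (k + 1) / (Nat.factorial (k + 1) : ℝ)) * m (k + 1) := by
  set w : ℕ → ℝ := fun n => Real.exp (-L) * (L ^ n / (Nat.factorial n : ℝ)) with hw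
  set a : ℕ → ℕ → ℝ := fun k n => ∫ x, void μ r x ^ k ∂(Measure.pi fun _ : Fin n => ν) with ha
  set c : ℕ → ℝ := fun k => (-1 : ℝ) ^ k * (δ ^ (k + 1) / (Nat.factorial (k + 1) : ℝ)) with hc
  have hmix : ∀ k, HasSum (fun n => w n * a k n) (m k) := fun k => by
    rw [hm]; exact mixture μ ν r L hL k
  have hw0 : ∀ n, 0 ≤ w n := fun n => by positivity
  have hws : Summable w := (Real.summable_pow_div_factorial L).mul_left _
  have ha0 : ∀ k n, 0 ≤ a k n := fun k n =>
    integral_nonneg fun x => pow_nonneg (void_nonneg _ _ _) _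
  have ha1 : ∀ k n, a k n ≤ 1 := fun k n => by
    calc a k n ≤ ∫ x, (1 : ℝ) ∂(Measure.pi fun _ : Fin n => ν) :=
          integral_mono (void_pow_integrable ν μ r n k) (integrable_const _) fun x =>
            pow_le_one₀ (void_nonneg _ _ _) (void_le_one _ _ _)
      _ = 1 := by simp
  have hcabs : ∀ k, |c k| = δ ^ (k + 1) / (Nat.factorial (k + 1) : ℝ) := fun k => by
    have : 0 ≤ δ ^ (k + 1) / (Nat.factorial (k + 1) : ℝ) := by positivity
    simp only [hc, abs_mul, abs_pow, abs_neg, abs_one, one_pow, one_mul]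
    exact abs_of_nonneg this
  have hcs : Summable fun k => |c k| := by simp_rw [hcabs]; exact summable_coef δ
  have hdouble : Summable (fun p : ℕ × ℕ => c p.1 * (w p.2 * a (p.1 + 1) p.2)) := by
    refine Summable.of_norm_bounded
      (g := fun p : ℕ × ℕ => |c p.1| * w p.2)
      (hcs.mul_of_nonneg hws (fun k => abs_nonneg _) hw0) fun p => ?_
    rw [norm_mul, Real.norm_eq_abs, Real.norm_of_nonneg (mul_nonneg (hw0 _) (ha0 _ _))]
    exact mul_le_mul_of_nonneg_left (mul_le_of_le_one_right (hw0 _) (ha1 _ _)) (abs_nonneg _)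
  have hrow : ∀ k, ∑' n, c k * (w n * a (k + 1) n) = c k * m (k + 1) := fun k => by
    rw [tsum_mul_left, (hmix (k + 1)).tsum_eq]
  constructor
  · have hs := hdouble.prod
    simp only [hrow] at hs
    exact hs.abs
  · calc (1 - Real.exp (-δ)) * m 1 = ∑' n, w n * ((1 - Real.exp (-δ)) * a 1 n) := by
          rw [← (hmix 1).tsum_eq, ← tsum_mul_left]
          congr 1; funext n; ring
      _ ≤ ∑' n, ∑' k, c k * (w n * a (k + 1) n) := by
          refine Summable.tsum_le_tsum (fun n => ?_) ?_ hdouble.prod_symm.prod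
          · have := fixed_n ν μ r δ hδ n
            calc _ ≤ w n * ∑' k, c k * a (k + 1) n := mul_le_mul_of_nonneg_left this (hw0 n)
              _ = _ := by rw [← tsum_mul_left]; congr 1; funext k; ring
          · have := ((hmix 1).summable).mul_left (1 - Real.exp (-δ))
            refine this.congr fun n => by ring
      _ = ∑' k, ∑' n, c k * (w n * a (k + 1) n) := by
          exact Summable.tsum_comm (f := fun k n => c k * (w n * a (k + 1) n)) hdouble
      _ = ∑' k, c k * m (k + 1) := by simp_rw [hrow]

lemma vol_ball (x : E2) (R : ℝ) (hR : 0 ≤ R) :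
    volume (closedBall x (R * (Real.sqrt π)⁻¹)) = ENNReal.ofReal (R ^ 2) := by
  rw [EuclideanSpace.volume_closedBall_fin_two]
  have : 0 ≤ R * (Real.sqrt π)⁻¹ := by positivity
  rw [← ENNReal.ofReal_pow this, ← ENNReal.ofReal_mul (by positivity)]
  congr 1
  rw [mul_pow, inv_pow, Real.sq_sqrt Real.pi_pos.le]
  field_simp

lemma vol_ball_one (x : E2) : volume (closedBall x (Real.sqrt π)⁻¹) = 1 := by
  have := vol_ball x 1 zero_le_one
  simpa using this

lemma unifBall_eq : unifBall = volume.restrict (closedBall (0 : E2) (Real.sqrt π)⁻¹) := by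
  rw [unifBall, vol_ball_one]; simp

instance : IsProbabilityMeasure unifBall := ⟨by rw [unifBall_eq, Measure.restrict_apply_univ, vol_ball_one]⟩

noncomputable def win : Measure E2 :=
  (4 : ENNReal)⁻¹ • volume.restrict (closedBall (0 : E2) (2 * (Real.sqrt π)⁻¹))

instance : IsProbabilityMeasure win := ⟨by
  have h : volume (closedBall (0 : E2) (2 * (Real.sqrt π)⁻¹)) = 4 := by
    rw [vol_ball _ _ (by norm_num)]; norm_num
  rw [win, Measure.smul_apply, Measure.restrict_apply_univ, h, smul_eq_mul]
  exact ENNReal.inv_mul_cancel (by norm_num) (by norm_num)⟩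

lemma area_eq {k : ℕ} (q : Fin k → E2) (hq : ∀ i, q i ∈ closedBall (0 : E2) (Real.sqrt π)⁻¹) :
    unionArea q = 4 * (1 - void win (Real.sqrt π)⁻¹ q) := by
  have hmeas : MeasurableSet (⋃ i, closedBall (q i) (Real.sqrt π)⁻¹) :=
    MeasurableSet.iUnion fun i => measurableSet_closedBall
  have hset : {y | ∀ i, (Real.sqrt π)⁻¹ < dist (q i) y}
      = (⋃ i, closedBall (q i) (Real.sqrt π)⁻¹)ᶜ := by
    ext y; simp [dist_comm]
  have hsub : (⋃ i, closedBall (q i) (Real.sqrt π)⁻¹) ⊆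
      closedBall (0 : E2) (2 * (Real.sqrt π)⁻¹) := by
    refine Set.iUnion_subset fun i => closedBall_subset_closedBall' ?_
    have := mem_closedBall.1 (hq i)
    linarith
  rw [void, hset, probReal_compl_eq_one_sub hmeas, unionArea, Measure.real, win,
    Measure.smul_apply, Measure.restrict_apply hmeas, Set.inter_eq_left.2 hsub]
  simp

end SeriesAux

/-- For all δ > 0 and G > 0, the series Σ_{k≥1} (−1)^{k−1}·(δ^k/k!)·E[e^{−δGα_k}]
converges absolutely and is ≥ (1 − e^{−δ})·e^{−δG}. -/
theorem series_converges_and_lower_bound (δ G : ℝ) (hδ : 0 < δ) (hG : 0 < G) :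
    Summable (fun k : ℕ =>
      |(-1 : ℝ) ^ k * (δ ^ (k + 1) / (Nat.factorial (k + 1) : ℝ)) * expMoment δ G (k + 1)|) ∧
    (1 - Real.exp (-δ)) * Real.exp (-(δ * G)) ≤
      ∑' k : ℕ, (-1 : ℝ) ^ k * (δ ^ (k + 1) / (Nat.factorial (k + 1) : ℝ)) *
        expMoment δ G (k + 1) := by
  have hm : ∀ k, expMoment δ G k = ∫ q, Real.exp (-((4 * (δ * G)) *
      (1 - SeriesAux.void SeriesAux.win (Real.sqrt π)⁻¹ q)))
        ∂(Measure.pi fun _ : Fin k => unifBall) := by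
    intro k
    refine integral_congr_ae ?_
    have h1 : ∀ᵐ p ∂unifBall, p ∈ closedBall (0 : SeriesAux.E2) (Real.sqrt π)⁻¹ := by
      rw [SeriesAux.unifBall_eq]
      exact ae_restrict_mem measurableSet_closedBall
    have h2 : ∀ᵐ q ∂(Measure.pi fun _ : Fin k => unifBall),
        ∀ i, q i ∈ closedBall (0 : SeriesAux.E2) (Real.sqrt π)⁻¹ := by
      rw [ae_all_iff]
      intro i
      exact (measurePreserving_eval (fun _ : Fin k => unifBall) i).quasiMeasurePreserving.ae h1
    filter_upwards [h2] with q hq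
    rw [SeriesAux.area_eq q hq]
    congr 1; ring
  have h1 : expMoment δ G 1 = Real.exp (-(δ * G)) := by
    have : ∀ q : Fin 1 → EuclideanSpace ℝ (Fin 2), unionArea q = 1 := fun q => by
      have : (⋃ i, closedBall (q i) (Real.sqrt π)⁻¹) = closedBall (q 0) (Real.sqrt π)⁻¹ := by
        ext y; simp
      rw [unionArea, this, SeriesAux.vol_ball_one]; simp
    simp [expMoment, this]
  have := SeriesAux.abstract_main unifBall SeriesAux.win (Real.sqrt π)⁻¹ (4 * (δ * G)) δ
    (by positivity) hδ (expMoment δ G) hm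
  rwa [h1] at this
end

section
/- Let δ > 0 and G > 0, let Λ = (Λ₁,…,Λ_S) be a probability vector (Λ_s ≥ 0, Σ_{s=1}^S Λ_s = 1) with λ := Σ_{s=1}^{S} s·Λ_s > 0, and define γ(x) := Σ_{s=1}^{S} (s·Λ_s/λ)·x^{s−1}·e^{−δ·(1−x^s)} for x ∈ [0,1], with Λ₂ := 0 if S < 2. If γ(1 − e^{−G·δ·λ·q}) < q for every q ∈ (0,1], then G·δ·e^{−δ}·(δ·Λ₁ + 2·Λ₂) ≤ 1; consequently, if δ·Λ₁ + 2·Λ₂ > 0, then G ≤ (e^{δ}/δ)·(1/(2Λ₂))·(1/(1 + δΛ₁/(2Λ₂))) ≤ e^{δ}/(δ·2Λ₂) whenever Λ₂ > 0. -/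
/-- Stability-condition upper bound on the and-or-tree threshold estimate:
with γ(x) = Σ_{s=1}^S (s·Λ_s/λ)·x^{s−1}·e^{−δ(1−x^s)} and Λ₂ := 0 if S < 2,
if γ(1 − e^{−Gδλq}) < q for every q ∈ (0,1], then
G·δ·e^{−δ}·(δΛ₁ + 2Λ₂) ≤ 1; consequently, whenever Λ₂ > 0,
G ≤ (e^δ/δ)·(1/(2Λ₂))·(1/(1 + δΛ₁/(2Λ₂))) ≤ e^δ/(δ·2Λ₂). -/
theorem stability_condition_upper_bound (δ G : ℝ) (hδ : 0 < δ) (hG : 0 < G)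
    (S : ℕ) (Λ : ℕ → ℝ)
    (hΛ0 : ∀ s ∈ Finset.Icc 1 S, 0 ≤ Λ s)
    (hΛ1 : ∑ s ∈ Finset.Icc 1 S, Λ s = 1)
    (lam : ℝ) (hlam : lam = ∑ s ∈ Finset.Icc 1 S, (s : ℝ) * Λ s) (hlam_pos : 0 < lam)
    (Λ₁ Λ₂ : ℝ) (hΛ₁ : Λ₁ = if 1 ≤ S then Λ 1 else 0) (hΛ₂ : Λ₂ = if 2 ≤ S then Λ 2 else 0)
    (γ : ℝ → ℝ)
    (hγ : γ = fun x : ℝ => ∑ s ∈ Finset.Icc 1 S,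
      ((s : ℝ) * Λ s / lam) * x ^ (s - 1) * Real.exp (-(δ * (1 - x ^ s))))
    (hstab : ∀ q ∈ Set.Ioc (0 : ℝ) 1, γ (1 - Real.exp (-(G * δ * lam * q))) < q) :
    G * δ * Real.exp (-δ) * (δ * Λ₁ + 2 * Λ₂) ≤ 1 ∧
    (0 < Λ₂ →
      G ≤ (Real.exp δ / δ) * (1 / (2 * Λ₂)) * (1 / (1 + δ * Λ₁ / (2 * Λ₂))) ∧
      (Real.exp δ / δ) * (1 / (2 * Λ₂)) * (1 / (1 + δ * Λ₁ / (2 * Λ₂))) ≤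
        Real.exp δ / (δ * (2 * Λ₂))) := by
  have hS : 1 ≤ S := by
    by_contra h
    have h0 : S = 0 := by omega
    subst h0
    simp at hΛ1
  have hterm : ∀ x : ℝ, 0 ≤ x → ∀ s ∈ Finset.Icc 1 S,
      ((s : ℝ) * Λ s / lam) * x ^ (s - 1) * Real.exp (-δ) ≤ γ x := by
    intro x hx s hs
    rw [hγ]
    have h1 : ((s : ℝ) * Λ s / lam) * x ^ (s - 1) * Real.exp (-δ) ≤
        ((s : ℝ) * Λ s / lam) * x ^ (s - 1) * Real.exp (-(δ * (1 - x ^ s))) := by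
      have h2 := hΛ0 s hs
      apply mul_le_mul_of_nonneg_left _ (by positivity)
      apply Real.exp_le_exp.mpr
      have : 0 ≤ δ * x ^ s := by positivity
      linarith
    refine h1.trans ?_
    refine Finset.single_le_sum (f := fun s : ℕ =>
      ((s : ℝ) * Λ s / lam) * x ^ (s - 1) * Real.exp (-(δ * (1 - x ^ s)))) ?_ hs
    intro t ht
    have h2 := hΛ0 t ht
    positivity
  have hx : ∀ q : ℝ, 0 < q → 0 ≤ 1 - Real.exp (-(G * δ * lam * q)) := by
    intro q hq
    have : Real.exp (-(G * δ * lam * q)) ≤ 1 := by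
      apply Real.exp_le_one_iff.mpr
      have : 0 < G * δ * lam * q := by positivity
      linarith
    linarith
  have hΛ₁0 : Λ₁ = 0 := by
    rw [if_pos hS] at hΛ₁
    have hmem : 1 ∈ Finset.Icc 1 S := by simp [hS]
    have hn := hΛ0 1 hmem
    rw [← hΛ₁] at hn
    by_contra hne
    have hp : 0 < Λ₁ := lt_of_le_of_ne hn (Ne.symm hne)
    have hc : 0 < Λ₁ / lam * Real.exp (-δ) := by positivity
    have hq : 0 < min 1 (Λ₁ / lam * Real.exp (-δ)) := lt_min one_pos hc
    have h1 := hstab _ ⟨hq, min_le_left _ _⟩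
    have h2 := hterm _ (hx _ hq) 1 hmem
    rw [← hΛ₁] at h2
    simp only [Nat.cast_one, one_mul, Nat.sub_self, pow_zero, mul_one] at h2
    have h3 := min_le_right 1 (Λ₁ / lam * Real.exp (-δ))
    linarith
  have hΛ₂n : 0 ≤ Λ₂ := by
    rw [hΛ₂]
    split_ifs with h
    · exact hΛ0 2 (by simp [h])
    · exact le_rfl
  have key : G * δ * Real.exp (-δ) * (2 * Λ₂) ≤ 1 := by
    by_cases h : 2 ≤ S
    · rw [if_pos h] at hΛ₂
      have hall : ∀ q : ℝ, 0 < q → q ≤ 1 →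
          G * δ * Real.exp (-δ) * (2 * Λ₂) ≤ 1 + G * δ * lam * q := by
        intro q hq hq1
        have h1 := hstab q ⟨hq, hq1⟩
        have h2 := hterm _ (hx q hq) 2 (by simp [h])
        rw [← hΛ₂] at h2
        have hy : 0 < G * δ * lam * q := by positivity
        set y := G * δ * lam * q with hyd
        have h3 : Real.exp (-y) ≤ 1 / (1 + y) := by
          rw [Real.exp_neg, ← one_div]
          apply one_div_le_one_div_of_le (by linarith)
          linarith [Real.add_one_le_exp y]
        have h4 : y / (1 + y) ≤ 1 - Real.exp (-y) := by
          have : y / (1 + y) = 1 - 1 / (1 + y) := by field_simp; ring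
          linarith
        have h5 : (2 * Λ₂ / lam) * (y / (1 + y)) * Real.exp (-δ) ≤
            (2 * Λ₂ / lam) * (1 - Real.exp (-y)) * Real.exp (-δ) := by
          gcongr
        norm_num at h2
        have h6 : (2 * Λ₂ / lam) * (y / (1 + y)) * Real.exp (-δ) < q := by linarith
        have h7 : (2 * Λ₂ / lam) * (y / (1 + y)) * Real.exp (-δ) =
            q * (G * δ * Real.exp (-δ) * (2 * Λ₂) / (1 + y)) := by
          have : (1 + y) ≠ 0 := by positivity
          rw [show (2 * Λ₂ / lam) * (y / (1 + y)) * Real.exp (-δ) =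
            (2 * Λ₂ / lam) * y * Real.exp (-δ) / (1 + y) by ring, hyd]
          field_simp
        rw [h7] at h6
        have h8 : G * δ * Real.exp (-δ) * (2 * Λ₂) / (1 + y) < 1 := by
          by_contra hcon
          push Not at hcon
          nlinarith
        rw [div_lt_one (by positivity)] at h8
        exact h8.le
      by_contra hcon
      push Not at hcon
      set A := G * δ * Real.exp (-δ) * (2 * Λ₂) with hA
      have hB : 0 < G * δ * lam := by positivity
      have hd : 0 < (A - 1) / (2 * (G * δ * lam)) := div_pos (by linarith) (by positivity)
      have h9 := hall _ (lt_min one_pos hd) (min_le_left _ _)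
      have h10 := mul_le_mul_of_nonneg_left
        (min_le_right 1 ((A - 1) / (2 * (G * δ * lam)))) hB.le
      have h11 : G * δ * lam * ((A - 1) / (2 * (G * δ * lam))) = (A - 1) / 2 := by
        field_simp
      linarith
    · rw [if_neg h] at hΛ₂
      simp [hΛ₂]
  rw [hΛ₁0]
  refine ⟨by simpa using key, fun hp => ?_⟩
  have he : Real.exp δ / δ * (1 / (2 * Λ₂)) * (1 / (1 + δ * 0 / (2 * Λ₂))) =
      Real.exp δ / (δ * (2 * Λ₂)) := by
    simp only [mul_zero, zero_div, add_zero, div_one, mul_one]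
    field_simp
  rw [he]
  refine ⟨?_, le_rfl⟩
  rw [le_div_iff₀ (by positivity)]
  have h1 := mul_le_mul_of_nonneg_left key (Real.exp_pos δ).le
  have h2 : Real.exp δ * Real.exp (-δ) = 1 := by rw [← Real.exp_add]; simp
  calc G * (δ * (2 * Λ₂)) = (Real.exp δ * Real.exp (-δ)) * (G * (δ * (2 * Λ₂))) := by
        rw [h2, one_mul]
    _ = Real.exp δ * (G * δ * Real.exp (-δ) * (2 * Λ₂)) := by ring
    _ ≤ Real.exp δ * 1 := h1
    _ = Real.exp δ := mul_one _
end
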